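/- arXiv:1510.02194 — 2 statements merged into one kernel-verified Lean document; each statement's English description precedes it below -/
import Mathlib

section
/- Let γ>1, β∈ℝ, v_l, v_r > 0, σ ≠ 0, and suppose the states U_l, U_r satisfy the six Rankine–Hugoniot conditions with speed σ. Set B_{i,l} = q_{i,l}/v_l and B_{i,r} = q_{i,r}/v_r for i = 2,3. If β²/σ² ≠ v_l, then B_{i,l} − B_{i,r} = ((v_r − v_l)/(v_l − β²σ^{-2}))·B_{i,r} for i=2,3. If in addition σ² < β²/v_l and v_r > v_l (Lax condition for a 4-shock), then for each i=2,3: B_{i,l} − B_{i,r} < 0 if B_{i,r} > 0; B_{i,l} − B_{i,r} > 0 if B_{i,r} < 0; and B_{i,l} = B_{i,r} if B_{i,r} = 0. -/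
/-!
Each transverse component satisfies two jump relations of its own. Eliminating the velocity jump
leaves `σ² [q] = β² [B]`, where `B = q / v`; substituting `q = v B` turns this into
`(v_l - β² / σ²) (B_l - B_r) = (v_r - v_l) B_r`. When `σ² < β² / v_l` the coefficient on the left is
negative, so `v_l < v_r` forces `B_l - B_r` and `B_r` to have opposite signs.
-/

/-- The Rankine–Hugoniot conditions of one transverse component `(q, u)` across a jump of speed `σ`
between specific volumes `vl` and `vr`: the induction equation and the transverse momentum equation.
The magnetic field component is encoded as `q / v`. -/
structure TransverseRankineHugoniot {K : Type*} [Field K] (β σ vl vr ql qr ul ur : K) : Prop where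
  induction_jump : -(β * (ur - ul)) = σ * (qr - ql)
  momentum_jump : -(β * (qr / vr - ql / vl)) = σ * (ur - ul)

namespace TransverseRankineHugoniot

variable {K : Type*} [Field K] {β σ vl vr ql qr ul ur : K}

theorem sq_mul_sub_eq_sq_mul_field_sub (h : TransverseRankineHugoniot β σ vl vr ql qr ul ur) :
    σ ^ 2 * (qr - ql) = β ^ 2 * (qr / vr - ql / vl) := by
  linear_combination β * h.momentum_jump - σ * h.induction_jump

theorem sub_mul_field_sub (h : TransverseRankineHugoniot β σ vl vr ql qr ul ur)
    (hvl : vl ≠ 0) (hvr : vr ≠ 0) (hσ : σ ≠ 0) :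
    (vl - β ^ 2 / σ ^ 2) * (ql / vl - qr / vr) = (vr - vl) * (qr / vr) := by
  have q_jump : qr - ql = β ^ 2 / σ ^ 2 * (qr / vr - ql / vl) := by
    rw [div_mul_eq_mul_div, eq_div_iff (pow_ne_zero 2 hσ), mul_comm]
    exact h.sq_mul_sub_eq_sq_mul_field_sub
  have ql_eq : vl * (ql / vl) = ql := mul_div_cancel₀ ql hvl
  have qr_eq : vr * (qr / vr) = qr := mul_div_cancel₀ qr hvr
  linear_combination ql_eq - qr_eq - q_jump

theorem field_sub_eq (h : TransverseRankineHugoniot β σ vl vr ql qr ul ur)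
    (hvl : vl ≠ 0) (hvr : vr ≠ 0) (hσ : σ ≠ 0) (hβ : β ^ 2 / σ ^ 2 ≠ vl) :
    ql / vl - qr / vr = (vr - vl) / (vl - β ^ 2 / σ ^ 2) * (qr / vr) := by
  rw [div_mul_eq_mul_div, eq_div_iff (sub_ne_zero.mpr hβ.symm), mul_comm]
  exact h.sub_mul_field_sub hvl hvr hσ

end TransverseRankineHugoniot

section Sign

variable {K : Type*} [Field K] [LinearOrder K] [IsStrictOrderedRing K]

theorem lt_sq_div_sq_of_sq_lt_sq_div {β σ v : K} (hσ : σ ≠ 0) (hlt : σ ^ 2 < β ^ 2 / v) :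
    v < β ^ 2 / σ ^ 2 := by
  have hσ_sq : 0 < σ ^ 2 := sq_pos_of_ne_zero hσ
  have hv : 0 < v := by
    by_contra! hv
    exact (hσ_sq.trans hlt).not_ge (div_nonpos_of_nonneg_of_nonpos (sq_nonneg β) hv)
  exact (lt_div_comm₀ hσ_sq hv).mp hlt

theorem opposite_sign_of_eq_mul_of_neg {k x y : K} (hx : x = k * y) (hk : k < 0) :
    (0 < y → x < 0) ∧ (y < 0 → 0 < x) ∧ (y = 0 → x = 0) := by
  subst hx
  exact ⟨mul_neg_of_neg_of_pos hk, mul_pos_of_neg_of_neg hk, mul_eq_zero_of_right k⟩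

theorem mhd_transverse_field_sign_4shock_general {β σ vl vr ql qr ul ur : K}
    (hvl : vl ≠ 0) (hvr : vr ≠ 0) (hσ : σ ≠ 0)
    (h : TransverseRankineHugoniot β σ vl vr ql qr ul ur) :
    (β ^ 2 / σ ^ 2 ≠ vl →
      ql / vl - qr / vr = (vr - vl) / (vl - β ^ 2 / σ ^ 2) * (qr / vr)) ∧
    (σ ^ 2 < β ^ 2 / vl → vl < vr →
      (0 < qr / vr → ql / vl - qr / vr < 0) ∧
      (qr / vr < 0 → 0 < ql / vl - qr / vr) ∧
      (qr / vr = 0 → ql / vl = qr / vr)) := by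
  refine ⟨h.field_sub_eq hvl hvr hσ, fun hslow hlax => ?_⟩
  have hβ : vl < β ^ 2 / σ ^ 2 := lt_sq_div_sq_of_sq_lt_sq_div hσ hslow
  have hcoeff : (vr - vl) / (vl - β ^ 2 / σ ^ 2) < 0 :=
    div_neg_of_pos_of_neg (sub_pos.mpr hlax) (sub_neg.mpr hβ)
  simpa only [sub_eq_zero] using
    opposite_sign_of_eq_mul_of_neg (h.field_sub_eq hvl hvr hσ hβ.ne') hcoeff

end Sign

/-- For states `U_l, U_r` satisfying the Rankine–Hugoniot conditions with speed
`σ ≠ 0`, setting `B_i = q_i/v`: if `β²/σ² ≠ v_l` then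
`B_{i,l} − B_{i,r} = ((v_r − v_l)/(v_l − β²σ⁻²))·B_{i,r}` for `i = 2,3`; and if in addition
`σ² < β²/v_l` and `v_r > v_l` (Lax condition for a 4-shock), then
`B_{i,l} − B_{i,r}` has sign opposite to `B_{i,r}` (and vanishes iff `B_{i,r} = 0`). -/
theorem mhd_transverse_field_sign_4shock
    (γ β σ vl vr q2l q3l u1l u2l u3l q2r q3r u1r u2r u3r : ℝ)
    (hγ : 1 < γ) (hvl : 0 < vl) (hvr : 0 < vr) (hσ : σ ≠ 0)
    (rh1 : -(u1r - u1l) = σ * (vr - vl))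
    (rh2 : -(β * (u2r - u2l)) = σ * (q2r - q2l))
    (rh3 : -(β * (u3r - u3l)) = σ * (q3r - q3l))
    (rh4 : (vr ^ (-γ) - vl ^ (-γ)) +
      ((q2r ^ 2 + q3r ^ 2) / (2 * vr ^ 2) - (q2l ^ 2 + q3l ^ 2) / (2 * vl ^ 2)) =
        σ * (u1r - u1l))
    (rh5 : -(β * (q2r / vr - q2l / vl)) = σ * (u2r - u2l))
    (rh6 : -(β * (q3r / vr - q3l / vl)) = σ * (u3r - u3l)) :
    (β ^ 2 / σ ^ 2 ≠ vl →
      (q2l / vl - q2r / vr = ((vr - vl) / (vl - β ^ 2 / σ ^ 2)) * (q2r / vr) ∧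
       q3l / vl - q3r / vr = ((vr - vl) / (vl - β ^ 2 / σ ^ 2)) * (q3r / vr))) ∧
    (σ ^ 2 < β ^ 2 / vl → vl < vr →
      ((0 < q2r / vr → q2l / vl - q2r / vr < 0) ∧
       (q2r / vr < 0 → 0 < q2l / vl - q2r / vr) ∧
       (q2r / vr = 0 → q2l / vl = q2r / vr) ∧
       (0 < q3r / vr → q3l / vl - q3r / vr < 0) ∧
       (q3r / vr < 0 → 0 < q3l / vl - q3r / vr) ∧
       (q3r / vr = 0 → q3l / vl = q3r / vr))) := by
  obtain ⟨field_sub₂, sign₂⟩ :=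
    mhd_transverse_field_sign_4shock_general hvl.ne' hvr.ne' hσ ⟨rh2, rh5⟩
  obtain ⟨field_sub₃, sign₃⟩ :=
    mhd_transverse_field_sign_4shock_general hvl.ne' hvr.ne' hσ ⟨rh3, rh6⟩
  exact ⟨fun hβ => ⟨field_sub₂ hβ, field_sub₃ hβ⟩, fun hslow hlax => by
    simpa only [and_assoc] using And.intro (sign₂ hslow hlax) (sign₃ hslow hlax)⟩
end

section
/- Let γ>1, β∈ℝ, v_l, v_r > 0, σ∈ℝ, and suppose states U_l, U_r satisfy the six Rankine–Hugoniot conditions with speed σ together with the entropy inequality [G] − σ[η] ≤ 0. Then σ·(v_r − v_l) ≥ 0. -/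
/-!
For jumps `[f] = f_r - f_l` and means `⟨f⟩ = (f_l + f_r) / 2`, the product rule
`[f g] = ⟨f⟩ [g] + ⟨g⟩ [f]` and the Rankine–Hugoniot conditions turn the entropy production into
`[G] - σ [η] = -σ ([e] + ⟨p⟩ [v] + [v] ∑ᵢ [qᵢ / v]² / 4)`,
where `e` is the internal energy, `e' = -p`. Since `p` is strictly convex, the trapezoidal rule
overestimates its integral `-[e]`, so the bracket has the strict sign of `[v]`.
-/

open Set

theorem strictConvexOn_rpow_of_neg {s : ℝ} (hs : s < 0) :
    StrictConvexOn ℝ (Ioi 0) fun x : ℝ ↦ x ^ s := by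
  refine strictConvexOn_of_deriv2_pos' (convex_Ioi 0)
    (continuousOn_id.rpow_const fun x hx ↦ Or.inl (ne_of_gt hx)) fun x (hx : 0 < x) ↦ ?_
  have deriv2_eq : deriv^[2] (fun x : ℝ ↦ x ^ s) x = s * (s - 1) * x ^ (s - 2) := by
    simp [Real.iter_deriv_rpow_const, descPochhammer_succ_left]
  rw [deriv2_eq]
  exact mul_pos (mul_pos_of_neg_of_neg hs (by linarith)) (Real.rpow_pos_of_pos hx _)

theorem hasDerivAt_rpow_one_sub_div {γ v : ℝ} (hγ : γ ≠ 1) (hv : v ≠ 0) :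
    HasDerivAt (fun x : ℝ ↦ x ^ (1 - γ) / (γ - 1)) (-v ^ (-γ)) v := by
  have hγ' : γ - 1 ≠ 0 := sub_ne_zero.2 hγ
  refine ((Real.hasDerivAt_rpow_const (p := 1 - γ) (Or.inl hv)).div_const (γ - 1)).congr_deriv ?_
  rw [show 1 - γ - 1 = -γ by ring]
  field_simp
  ring

theorem sub_lt_trapezoid_of_strictConvexOn_deriv {f F : ℝ → ℝ} {a b : ℝ} (hab : a < b)
    (hf : StrictConvexOn ℝ (Icc a b) f) (hF : ContinuousOn F (Icc a b))
    (hF' : ∀ x ∈ Ioo a b, HasDerivAt F (f x) x) :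
    F b - F a < (f a + f b) / 2 * (b - a) := by
  have hba : 0 < b - a := sub_pos.2 hab
  set m := (f b - f a) / (b - a)
  have slope_mul : m * (b - a) = f b - f a := div_mul_cancel₀ _ hba.ne'
  have lt_chord : ∀ x ∈ Ioo a b, f x < f a + m * (x - a) := fun x hx ↦ by
    have := hf.secant_strict_mono_aux1 (left_mem_Icc.2 hab.le) (right_mem_Icc.2 hab.le) hx.1 hx.2
    refine lt_of_mul_lt_mul_left ?_ hba.le
    linear_combination this - (x - a) * slope_mul
  let H : ℝ → ℝ := fun x ↦ F x - (f a * (x - a) + m * (x - a) ^ 2 / 2)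
  have hasDerivAt_H : ∀ x ∈ Ioo a b, HasDerivAt H (f x - (f a + m * (x - a))) x := fun x hx ↦ by
    have hsub : HasDerivAt (fun x ↦ x - a) 1 x := (hasDerivAt_id x).sub_const a
    refine ((hF' x hx).sub ((hsub.const_mul (f a)).add
      (((hsub.pow 2).const_mul m).div_const 2))).congr_deriv ?_
    ring
  have strictAntiOn_H : StrictAntiOn H (Icc a b) := by
    refine strictAntiOn_of_deriv_neg (convex_Icc a b) (by fun_prop) fun x hx ↦ ?_
    rw [interior_Icc] at hx
    rw [(hasDerivAt_H x hx).deriv]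
    exact sub_neg.2 (lt_chord x hx)
  have H_lt : H b < H a := strictAntiOn_H (left_mem_Icc.2 hab.le) (right_mem_Icc.2 hab.le) hab
  simp only [H] at H_lt
  linear_combination H_lt + (b - a) / 2 * slope_mul

theorem mul_trapezoid_defect_pos {p e : ℝ → ℝ} {s : Set ℝ} (hp : StrictConvexOn ℝ s p)
    (he : ∀ v ∈ s, HasDerivAt e (-p v) v) {a b : ℝ} (ha : a ∈ s) (hb : b ∈ s) (hab : a ≠ b) :
    0 < (b - a) * (e b - e a + (p a + p b) / 2 * (b - a)) := by
  wlog hlt : a < b generalizing a b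
  · linear_combination this hb ha hab.symm (hab.lt_or_gt.resolve_left hlt)
  have hsub : Icc a b ⊆ s := hp.1.ordConnected.out ha hb
  have trapezoid : -e b - -e a < (p a + p b) / 2 * (b - a) :=
    sub_lt_trapezoid_of_strictConvexOn_deriv (F := -e) hlt (hp.subset hsub (convex_Icc a b))
      (fun v hv ↦ (he v (hsub hv)).neg.continuousAt.continuousWithinAt)
      fun v hv ↦ (he v (hsub (Ioo_subset_Icc_self hv))).neg.congr_deriv (neg_neg _)
  exact mul_pos (sub_pos.2 hlt) (by linarith)

/-- A state `(v, q, u₁, u)` of the plane Lagrangian MHD equations: specific volume `v`, velocity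
`u₁` in the direction of propagation, and, for each transverse direction `i : ι`, the product `q i`
of `v` with the magnetic field and the velocity `u i`. Physically `ι` has the two elements `2`
and `3`. -/
structure MHDState (ι : Type*) where
  v : ℝ
  q : ι → ℝ
  u₁ : ℝ
  u : ι → ℝ

namespace MHDState

variable {ι : Type*} [Fintype ι]

/-- The sum of the gas pressure, given by the law `p`, and the magnetic pressure of the transverse
field `q / v`. -/
noncomputable def totalPressure (p : ℝ → ℝ) (U : MHDState ι) : ℝ :=
  p U.v + (∑ i, U.q i ^ 2) / (2 * U.v ^ 2)

/-- The mathematical entropy `η`, which is the total energy; `e` is the internal energy as a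
function of the specific volume. -/
noncomputable def entropy (e : ℝ → ℝ) (U : MHDState ι) : ℝ :=
  e U.v + (U.u₁ ^ 2 + ∑ i, U.u i ^ 2) / 2 + (∑ i, U.q i ^ 2) / (2 * U.v)

/-- The flux `G` of `entropy`; `β` is the constant longitudinal magnetic field. -/
noncomputable def entropyFlux (p : ℝ → ℝ) (β : ℝ) (U : MHDState ι) : ℝ :=
  U.totalPressure p * U.u₁ - β / U.v * ∑ i, U.q i * U.u i

/-- The Rankine–Hugoniot conditions for a discontinuity of speed `σ` between the left state `L` and
the right state `R`. -/
structure RankineHugoniot (p : ℝ → ℝ) (β σ : ℝ) (L R : MHDState ι) : Prop where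
  volume : -(R.u₁ - L.u₁) = σ * (R.v - L.v)
  induction : ∀ i, -(β * (R.u i - L.u i)) = σ * (R.q i - L.q i)
  momentum : R.totalPressure p - L.totalPressure p = σ * (R.u₁ - L.u₁)
  transverse_momentum : ∀ i, -(β * (R.q i / R.v - L.q i / L.v)) = σ * (R.u i - L.u i)

end MHDState

theorem longitudinal_entropy_production {σ vl vr ul ur Pl Pr : ℝ}
    (volume : -(ur - ul) = σ * (vr - vl)) (momentum : Pr - Pl = σ * (ur - ul)) :
    Pr * ur - Pl * ul - σ * (ur ^ 2 / 2 - ul ^ 2 / 2) = -(σ * (vr - vl) * ((Pl + Pr) / 2)) := by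
  linear_combination (ul + ur) / 2 * momentum - (Pl + Pr) / 2 * volume

theorem transverse_entropy_production {β σ vl vr ql qr ul ur : ℝ} (hvl : vl ≠ 0) (hvr : vr ≠ 0)
    (induction : -(β * (ur - ul)) = σ * (qr - ql))
    (momentum : -(β * (qr / vr - ql / vl)) = σ * (ur - ul)) :
    -(β / vr * (qr * ur) - β / vl * (ql * ul)) -
        σ * (ur ^ 2 / 2 + qr ^ 2 / (2 * vr) - (ul ^ 2 / 2 + ql ^ 2 / (2 * vl))) =
      σ * (vr - vl) * ((ql ^ 2 / (2 * vl ^ 2) + qr ^ 2 / (2 * vr ^ 2)) / 2 -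
        (qr / vr - ql / vl) ^ 2 / 4) := by
  obtain ⟨bl, rfl⟩ : ∃ b, ql = vl * b := ⟨ql / vl, by field_simp⟩
  obtain ⟨br, rfl⟩ : ∃ b, qr = vr * b := ⟨qr / vr, by field_simp⟩
  rw [mul_div_cancel_left₀ _ hvl, mul_div_cancel_left₀ _ hvr] at momentum ⊢
  field_simp
  linear_combination 8 * (ul + ur) * momentum + 8 * (bl + br) * induction

theorem MHDState.RankineHugoniot.entropy_production {ι : Type*} [Fintype ι] {p : ℝ → ℝ} {β σ : ℝ}
    {L R : MHDState ι} (h : RankineHugoniot p β σ L R) (e : ℝ → ℝ) (hL : L.v ≠ 0) (hR : R.v ≠ 0) :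
    R.entropyFlux p β - L.entropyFlux p β - σ * (R.entropy e - L.entropy e) =
      -(σ * (e R.v - e L.v + (p L.v + p R.v) / 2 * (R.v - L.v) +
        (R.v - L.v) / 4 * ∑ i, (R.q i / R.v - L.q i / L.v) ^ 2)) := by
  have longitudinal := longitudinal_entropy_production h.volume h.momentum
  have transverse := Finset.sum_congr (rfl : Finset.univ = Finset.univ) fun i _ ↦
    transverse_entropy_production hL hR (h.induction i) (h.transverse_momentum i)
  simp only [Finset.sum_neg_distrib, Finset.sum_sub_distrib, Finset.sum_add_distrib,
    ← Finset.mul_sum, ← Finset.sum_div] at transverse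
  simp only [MHDState.entropyFlux, MHDState.entropy, MHDState.totalPressure] at longitudinal ⊢
  linear_combination longitudinal + transverse

theorem mhd_entropy_inequality_volume_sign_general {ι : Type*} [Fintype ι] {p e : ℝ → ℝ}
    {β σ : ℝ} {L R : MHDState ι} (hp : StrictConvexOn ℝ (Ioi 0) p)
    (he : ∀ v ∈ Ioi 0, HasDerivAt e (-p v) v) (hL : 0 < L.v) (hR : 0 < R.v)
    (hRH : MHDState.RankineHugoniot p β σ L R)
    (hent : R.entropyFlux p β - L.entropyFlux p β - σ * (R.entropy e - L.entropy e) ≤ 0) :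
    0 ≤ σ * (R.v - L.v) := by
  rcases eq_or_ne L.v R.v with hv | hv
  · simp [hv]
  rw [hRH.entropy_production e hL.ne' hR.ne', neg_nonpos] at hent
  set defect := e R.v - e L.v + (p L.v + p R.v) / 2 * (R.v - L.v)
  set fieldJump := ∑ i, (R.q i / R.v - L.q i / L.v) ^ 2
  have defect_pos : 0 < (R.v - L.v) * defect := mul_trapezoid_defect_pos hp he hL hR hv
  have fieldJump_nonneg : 0 ≤ (R.v - L.v) ^ 2 / 4 * fieldJump := by positivity
  have bracket_pos : 0 < (R.v - L.v) * (defect + (R.v - L.v) / 4 * fieldJump) := by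
    linear_combination defect_pos + fieldJump_nonneg
  refine nonneg_of_mul_nonneg_left ?_ bracket_pos
  linear_combination (R.v - L.v) ^ 2 * hent

/-- For states `U_l, U_r` satisfying the Rankine–Hugoniot conditions with speed
`σ` together with the entropy inequality `[G] − σ[η] ≤ 0`, one has `σ (v_r − v_l) ≥ 0`. -/
theorem mhd_entropy_inequality_volume_sign
    (γ β σ vl vr q2l q3l u1l u2l u3l q2r q3r u1r u2r u3r : ℝ)
    (hγ : 1 < γ) (hvl : 0 < vl) (hvr : 0 < vr)
    (rh1 : -(u1r - u1l) = σ * (vr - vl))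
    (rh2 : -(β * (u2r - u2l)) = σ * (q2r - q2l))
    (rh3 : -(β * (u3r - u3l)) = σ * (q3r - q3l))
    (rh4 : (vr ^ (-γ) - vl ^ (-γ)) +
      ((q2r ^ 2 + q3r ^ 2) / (2 * vr ^ 2) - (q2l ^ 2 + q3l ^ 2) / (2 * vl ^ 2)) =
        σ * (u1r - u1l))
    (rh5 : -(β * (q2r / vr - q2l / vl)) = σ * (u2r - u2l))
    (rh6 : -(β * (q3r / vr - q3l / vl)) = σ * (u3r - u3l))
    (etal etar Gl Gr : ℝ)
    (hetal : etal = vl ^ (1 - γ) / (γ - 1) + (u1l ^ 2 + u2l ^ 2 + u3l ^ 2) / 2 +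
      (q2l ^ 2 + q3l ^ 2) / (2 * vl))
    (hetar : etar = vr ^ (1 - γ) / (γ - 1) + (u1r ^ 2 + u2r ^ 2 + u3r ^ 2) / 2 +
      (q2r ^ 2 + q3r ^ 2) / (2 * vr))
    (hGl : Gl = (vl ^ (-γ) + (q2l ^ 2 + q3l ^ 2) / (2 * vl ^ 2)) * u1l -
      (β / vl) * (q2l * u2l + q3l * u3l))
    (hGr : Gr = (vr ^ (-γ) + (q2r ^ 2 + q3r ^ 2) / (2 * vr ^ 2)) * u1r -
      (β / vr) * (q2r * u2r + q3r * u3r))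
    (hent : (Gr - Gl) - σ * (etar - etal) ≤ 0) :
    0 ≤ σ * (vr - vl) := by
  refine mhd_entropy_inequality_volume_sign_general (β := β)
    (L := ⟨vl, ![q2l, q3l], u1l, ![u2l, u3l]⟩) (R := ⟨vr, ![q2r, q3r], u1r, ![u2r, u3r]⟩)
    (strictConvexOn_rpow_of_neg (by linarith : -γ < 0))
    (fun v hv ↦ hasDerivAt_rpow_one_sub_div hγ.ne' (ne_of_gt hv)) hvl hvr
    ⟨rh1, Fin.forall_fin_two.2 ⟨rh2, rh3⟩, ?_, Fin.forall_fin_two.2 ⟨rh5, rh6⟩⟩ ?_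
  · simpa [MHDState.totalPressure, add_sub_add_comm] using rh4
  · simpa [MHDState.entropyFlux, MHDState.totalPressure, MHDState.entropy, hetal, hetar, hGl, hGr,
      add_assoc] using hent
end
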